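/- arXiv:1707.09846 — 2 statements merged into one kernel-verified Lean document; each statement's English description precedes it below -/
import Mathlib

section
/- Let p be a prime, R a commutative ring of characteristic p, and T : R[y] → R[y] an R-linear operator with deg T(f) < deg f for every nonzero f ∈ R[y]. Suppose there exist integers d ≥ D ≥ 1, an element a ∈ R, and polynomials c_1, …, c_d ∈ R[y] with deg c_i ≤ i − D for 1 ≤ i ≤ d−1 and c_d = a·y^d + r for some r ∈ R[y] with deg r ≤ d − D, such that T(y^n) = −( c_1·T(y^{n−1}) + c_2·T(y^{n−2}) + ⋯ + c_d·T(y^{n−d}) ) for all n ≥ d (i.e., the companion polynomial of the recursion is X^d + a·y^d + terms of total degree ≤ d − D). Let b be a power of p with b ≥ d and b − D ≥ 2, and suppose that either b − d ≤ 1 or D ≤ b/2. Then there is a constant C > 0 such that N_T(y^n) ≤ C·n^{log(b−D)/log b} for all n ≥ 1. -/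
open Polynomial

/-- The nilpotence index of `f` with respect to `T`: the largest `k` with `T^k f ≠ 0`. -/
noncomputable def nilpIndex {R : Type} [CommRing R]
    (T : Module.End R (Polynomial R)) (f : Polynomial R) : ℕ :=
  sSup {k : ℕ | (T ^ k) f ≠ 0}

/-
Write `y` for the variable of `R[X]`. Raising the companion polynomial of the recursion to the
power `b ^ k`, a power of the characteristic, gives a recursion for `T (y ^ n)` whose shifts and
coefficients are all spread out by the factor `b ^ k`. Choose `k` so that `b ^ k` is the place of
the leading base-`b` digit of `n / d`. The *content* of `n`, which reads the base-`b` digits of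
`n / d` in base `b - D`, is subadditive, and the terms of that recursion do not increase it:
leaving the place `b ^ k` saves a multiple of `(b - D) ^ k` which pays for the coefficients. By
induction `T` strictly lowers content, so the nilpotence index of `y ^ n` is at most the content
of `n`, which is `O(n ^ (log (b - D) / log b))`.
-/

-- A carry trades `d` in the remainder for one more in the quotient, which costs only `e ≤ d`.
lemma mul_div_add_mod_add_le {g : ℕ → ℕ} {d e : ℕ} (hd : 0 < d) (he : e ≤ d) {x y : ℕ}
    (hadd : g (x / d + y / d) ≤ g (x / d) + g (y / d))
    (hcarry : d ≤ x % d + y % d → g (x / d + y / d + 1) ≤ g (x / d) + g (y / d) + 1) :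
    e * g ((x + y) / d) + (x + y) % d ≤ (e * g (x / d) + x % d) + (e * g (y / d) + y % d) := by
  rw [Nat.add_div hd]
  split_ifs with hc
  · have hmod := Nat.add_mod_add_of_le_add_mod hc
    have hmul := Nat.mul_le_mul_left e (hcarry hc)
    simp only [mul_add, mul_one] at hmul
    omega
  · have hmod := Nat.add_mod_of_add_mod_lt (not_le.1 hc)
    have hmul := Nat.mul_le_mul_left e hadd
    rw [mul_add] at hmul
    rw [add_zero]
    omega

/-- The content of `q`: its base-`b` digits read in base `w`. A smaller base
`w ≤ b` discounts the higher digits while keeping subadditivity. -/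
def digitContent (b w q : ℕ) : ℕ :=
  Nat.ofDigits w (Nat.digits b q)

section digitContent

variable {b w : ℕ}

@[simp]
lemma digitContent_zero : digitContent b w 0 = 0 := by
  simp [digitContent]

lemma digitContent_eq (hb : 1 < b) (q : ℕ) :
    digitContent b w q = w * digitContent b w (q / b) + q % b := by
  rcases Nat.eq_zero_or_pos q with rfl | hq
  · simp
  · simp [digitContent, Nat.digits_def' hb hq, Nat.ofDigits_cons, add_comm]

lemma digitContent_of_lt (hb : 1 < b) {q : ℕ} (hq : q < b) : digitContent b w q = q := by
  rw [digitContent_eq hb, Nat.div_eq_of_lt hq, Nat.mod_eq_of_lt hq, digitContent_zero, mul_zero,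
    zero_add]

lemma digitContent_le_self (hw : w ≤ b) (q : ℕ) : digitContent b w q ≤ q :=
  (Nat.ofDigits_monotone _ hw).trans_eq (Nat.ofDigits_digits b q)

lemma digitContent_mul_add (hb : 1 < b) (q : ℕ) {u : ℕ} (hu : u < b) :
    digitContent b w (b * q + u) = w * digitContent b w q + u := by
  rw [digitContent_eq hb, Nat.mul_add_mod, Nat.mod_eq_of_lt hu, Nat.mul_add_div (by omega),
    Nat.div_eq_of_lt hu, add_zero]

lemma digitContent_pow_mul_add (hb : 1 < b) (k q : ℕ) {r : ℕ} (hr : r < b ^ k) :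
    digitContent b w (b ^ k * q + r) = w ^ k * digitContent b w q + digitContent b w r := by
  induction k generalizing r with
  | zero =>
    obtain rfl : r = 0 := by simpa using hr
    simp
  | succ k ih =>
    have hdiv : r / b < b ^ k := Nat.div_lt_of_lt_mul (by rwa [← pow_succ'])
    have hmod : r % b < b := Nat.mod_lt _ (by omega)
    calc digitContent b w (b ^ (k + 1) * q + r)
        = digitContent b w (b * (b ^ k * q + r / b) + r % b) := by
          rw [mul_add, add_assoc, Nat.div_add_mod, pow_succ', mul_assoc]
      _ = w ^ (k + 1) * digitContent b w q + (w * digitContent b w (r / b) + r % b) := by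
          rw [digitContent_mul_add hb _ hmod, ih hdiv]; ring
      _ = w ^ (k + 1) * digitContent b w q + digitContent b w r := by
          rw [← digitContent_eq hb]

lemma digitContent_pow (hb : 1 < b) (k : ℕ) : digitContent b w (b ^ k) = w ^ k := by
  simpa [digitContent_of_lt hb hb] using
    digitContent_pow_mul_add (w := w) hb k 1 (r := 0) (by positivity)

lemma digitContent_sub_pow_add (hb : 1 < b) {k q : ℕ} (hkq : b ^ k ≤ q) (hqk : q < b ^ (k + 1)) :
    digitContent b w (q - b ^ k) + w ^ k = digitContent b w q := by
  have hpos : 0 < b ^ k := by positivity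
  have hr : q % b ^ k < b ^ k := Nat.mod_lt _ hpos
  have hlead : q / b ^ k < b := Nat.div_lt_of_lt_mul (by rwa [← pow_succ])
  obtain ⟨u, hu⟩ : ∃ u, q / b ^ k = u + 1 :=
    Nat.exists_eq_add_one.2 (Nat.div_pos hkq hpos)
  have hq : q = b ^ k * (u + 1) + q % b ^ k := by rw [← hu, Nat.div_add_mod]
  have hsub : q - b ^ k = b ^ k * u + q % b ^ k := by rw [mul_add, mul_one] at hq; omega
  rw [hsub, digitContent_pow_mul_add hb k u hr, digitContent_of_lt hb (show u < b by omega)]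
  conv_rhs => rw [hq, digitContent_pow_mul_add hb k _ hr, digitContent_of_lt hb (hu ▸ hlead)]
  ring

lemma digitContent_add_le (hb : 1 < b) (hw : w ≤ b) (x y : ℕ) :
    digitContent b w (x + y) ≤ digitContent b w x + digitContent b w y := by
  induction hs : x + y using Nat.strong_induction_on generalizing x y with
  | _ s ih =>
  subst hs
  rcases Nat.eq_zero_or_pos (x + y) with h0 | hpos
  · simp [h0]
  have hx := Nat.div_add_mod x b
  have hy := Nat.div_add_mod y b
  have hquot : 2 * (x / b + y / b) ≤ b * (x / b) + b * (y / b) := by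
    rw [← mul_add]; exact Nat.mul_le_mul_right _ hb
  have hadd := ih (x / b + y / b) (by omega) _ _ rfl
  rw [digitContent_eq hb (x + y), digitContent_eq hb x, digitContent_eq hb y]
  refine mul_div_add_mod_add_le (by omega) hw hadd fun hc => ?_
  calc digitContent b w (x / b + y / b + 1)
      ≤ digitContent b w (x / b + y / b) + digitContent b w 1 := ih _ (by omega) _ _ rfl
    _ ≤ digitContent b w (x / b) + digitContent b w (y / b) + 1 :=
        add_le_add hadd (digitContent_le_self hw 1)

lemma digitContent_add_base_le (hb : 1 < b) (hw : 2 ≤ w) {k q : ℕ} (hq : q < b ^ k) :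
    digitContent b w q + b ≤ b * w ^ k := by
  induction k generalizing q with
  | zero =>
    obtain rfl : q = 0 := by simpa using hq
    simp
  | succ k ih =>
    have hih := Nat.mul_le_mul_left w (ih (Nat.div_lt_of_lt_mul (by rwa [← pow_succ'])))
    have hmod : q % b < b := Nat.mod_lt q (by omega)
    have hwb : 2 * b ≤ w * b := Nat.mul_le_mul_right b hw
    calc digitContent b w q + b = w * digitContent b w (q / b) + q % b + b := by
          rw [← digitContent_eq hb]
      _ ≤ w * (digitContent b w (q / b) + b) := by rw [mul_add]; omega
      _ ≤ w * (b * w ^ k) := hih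
      _ = b * w ^ (k + 1) := by ring

end digitContent

/-- The content adapted to a recursion of order `d`, the weight of `y ^ n` that the operator is
shown to lower: for `n = d * q + s` with `s < d`, the quotient `q` is replaced by its content with
respect to the bases `b` and `b - D`, and a full step `d` is worth only `d - D`. -/
def recContent (b d D n : ℕ) : ℕ :=
  (d - D) * digitContent b (b - D) (n / d) + n % d

section recContent

variable {b d D : ℕ}

lemma recContent_of_lt {n : ℕ} (hn : n < d) : recContent b d D n = n := by
  simp [recContent, Nat.div_eq_of_lt hn, Nat.mod_eq_of_lt hn]

lemma recContent_le_self (n : ℕ) : recContent b d D n ≤ n :=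
  calc recContent b d D n ≤ d * (n / d) + n % d := by
        unfold recContent
        gcongr
        exacts [Nat.sub_le _ _, digitContent_le_self (Nat.sub_le _ _) _]
    _ = n := Nat.div_add_mod n d

lemma recContent_add_le (hb : 1 < b) (hd : 0 < d) (x y : ℕ) :
    recContent b d D (x + y) ≤ recContent b d D x + recContent b d D y := by
  have hw : b - D ≤ b := Nat.sub_le b D
  have hadd := digitContent_add_le hb hw (x / d) (y / d)
  exact mul_div_add_mod_add_le hd (Nat.sub_le d D) hadd fun _ =>
    (digitContent_add_le hb hw _ _).trans (add_le_add hadd (digitContent_le_self hw 1))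

lemma recContent_base_mul_le (hb : 1 < b) (hd : 0 < d) (hDd : D ≤ d) (hdb : d ≤ b) (x : ℕ) :
    recContent b d D (b * x) ≤ (b - D) * recContent b d D x := by
  set q := x / d
  set s := x % d
  set u := b * s / d with hu
  set v := b * s % d
  have hx : d * q + s = x := Nat.div_add_mod x d
  have huv : d * u + v = b * s := Nat.div_add_mod _ d
  have hvd : v < d := Nat.mod_lt _ hd
  have hub : u < b := Nat.div_lt_of_lt_mul <| by
    rw [mul_comm d]; exact Nat.mul_lt_mul_of_pos_left (Nat.mod_lt x hd) (by omega)
  have hsu : s ≤ u := by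
    rw [hu, Nat.le_div_iff_mul_le hd, mul_comm]
    exact Nat.mul_le_mul_right _ hdb
  have hbx : b * x = d * (b * q + u) + v := by
    rw [← hx, mul_add, mul_add, add_assoc, huv, mul_left_comm]
  have hdiv : b * x / d = b * q + u := by
    rw [hbx, Nat.mul_add_div hd, Nat.div_eq_of_lt hvd, add_zero]
  have hmod : b * x % d = v := by rw [hbx, Nat.mul_add_mod, Nat.mod_eq_of_lt hvd]
  have hcarry : (d - D) * u + v ≤ (b - D) * s := by
    have := Nat.mul_le_mul_left D hsu
    rw [Nat.sub_mul, Nat.sub_mul]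
    have := Nat.mul_le_mul_right u hDd
    omega
  calc recContent b d D (b * x)
      = (d - D) * ((b - D) * digitContent b (b - D) q + u) + v := by
        rw [recContent, hdiv, hmod, digitContent_mul_add hb _ hub]
    _ = (b - D) * ((d - D) * digitContent b (b - D) q) + ((d - D) * u + v) := by ring
    _ ≤ (b - D) * ((d - D) * digitContent b (b - D) q) + (b - D) * s := by gcongr
    _ = (b - D) * recContent b d D x := (mul_add _ _ _).symm

lemma recContent_mul_pow_le (hb : 1 < b) (hd : 0 < d) (hDd : D ≤ d) (hdb : d ≤ b) (j k : ℕ) :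
    recContent b d D (j * b ^ k) ≤ j * (b - D) ^ k := by
  induction k with
  | zero => simpa using recContent_le_self j
  | succ k ih =>
    calc recContent b d D (j * b ^ (k + 1)) = recContent b d D (b * (j * b ^ k)) := by
          rw [pow_succ', mul_left_comm]
      _ ≤ (b - D) * (j * (b - D) ^ k) :=
          (recContent_base_mul_le hb hd hDd hdb _).trans (Nat.mul_le_mul_left _ ih)
      _ = j * (b - D) ^ (k + 1) := by ring

lemma recContent_order_mul_pow (hb : 1 < b) (hd : 0 < d) (k : ℕ) :
    recContent b d D (d * b ^ k) = (d - D) * (b - D) ^ k := by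
  rw [recContent, Nat.mul_div_cancel_left _ hd, Nat.mul_mod_right, digitContent_pow hb, add_zero]

lemma recContent_sub_order_mul_pow_add (hb : 1 < b) (hd : 0 < d) {k n : ℕ}
    (hkn : b ^ k ≤ n / d) (hnk : n / d < b ^ (k + 1)) :
    recContent b d D (n - d * b ^ k) + (d - D) * (b - D) ^ k = recContent b d D n := by
  have hle : d * b ^ k ≤ n := by rw [mul_comm]; exact (Nat.le_div_iff_mul_le hd).1 hkn
  unfold recContent
  rw [Nat.sub_mul_div, Nat.sub_mul_mod hle, ← digitContent_sub_pow_add hb hkn hnk]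
  ring

lemma recContent_mul_pow_add_sub_le (hb : 1 < b) (hd : 0 < d) (hDd : D ≤ d) (hdb : d ≤ b)
    {i j k n : ℕ} (hkn : b ^ k ≤ n / d) (hnk : n / d < b ^ (k + 1)) (hid : i ≤ d)
    (hij : j + D ≤ i ∨ i = d ∧ j = d) :
    recContent b d D (j * b ^ k) + recContent b d D (n - i * b ^ k) ≤ recContent b d D n := by
  have hlead := recContent_sub_order_mul_pow_add (D := D) hb hd hkn hnk
  rcases hij with hji | ⟨rfl, rfl⟩
  · obtain ⟨t, rfl⟩ := Nat.exists_eq_add_of_le hid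
    have hle : (i + t) * b ^ k ≤ n := by rw [mul_comm]; exact (Nat.le_div_iff_mul_le hd).1 hkn
    have hsplit : n - i * b ^ k = (n - (i + t) * b ^ k) + t * b ^ k := by
      rw [add_mul] at *; omega
    have hsub := recContent_add_le (D := D) hb hd (n - (i + t) * b ^ k) (t * b ^ k)
    have hpay : (j + t) * (b - D) ^ k ≤ (i + t - D) * (b - D) ^ k :=
      Nat.mul_le_mul_right _ (by omega)
    have hj := recContent_mul_pow_le hb hd hDd hdb j k
    have ht := recContent_mul_pow_le hb hd hDd hdb t k
    rw [add_mul] at hpay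
    rw [hsplit]
    omega
  · rw [recContent_order_mul_pow hb hd]
    omega

lemma recContent_le (hw : 2 ≤ b - D) (hd : 0 < d) {k n : ℕ} (hn : n < b ^ (k + 1)) :
    recContent b d D n ≤ d * (b * (b - D) + 1) * (b - D) ^ k := by
  have hdigit : digitContent b (b - D) (n / d) ≤ b * (b - D) ^ (k + 1) := le_of_add_le_left <|
    digitContent_add_base_le (by omega) hw ((Nat.div_le_self n d).trans_lt hn)
  have hmod : n % d ≤ d * (b - D) ^ k :=
    (Nat.mod_lt n hd).le.trans (Nat.le_mul_of_pos_right d (by positivity))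
  calc recContent b d D n ≤ d * (b * (b - D) ^ (k + 1)) + d * (b - D) ^ k :=
        add_le_add (Nat.mul_le_mul (Nat.sub_le _ _) hdigit) hmod
    _ = d * (b * (b - D) + 1) * (b - D) ^ k := by ring

end recContent

lemma pow_log_le_rpow_log_div_log {b w n : ℕ} (hb : 1 < b) (hw : 1 ≤ w) (hn : n ≠ 0) :
    (w : ℝ) ^ Nat.log b n ≤ (n : ℝ) ^ (Real.log w / Real.log b) := by
  have hb' : (1 : ℝ) < b := by exact_mod_cast hb
  have hw' : (1 : ℝ) ≤ w := by exact_mod_cast hw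
  have hbase : (b : ℝ) ^ (Real.log w / Real.log b) = w := by
    rw [Real.log_div_log]
    exact Real.rpow_logb (by positivity) hb'.ne' (by positivity)
  calc (w : ℝ) ^ Nat.log b n = ((b : ℝ) ^ Nat.log b n) ^ (Real.log w / Real.log b) := by
        rw [← Real.rpow_natCast_mul (by positivity), mul_comm,
          Real.rpow_mul_natCast (by positivity), hbase]
    _ ≤ (n : ℝ) ^ (Real.log w / Real.log b) := by
        have := Real.log_nonneg hw'
        have := Real.log_nonneg hb'.le
        gcongr
        exact_mod_cast Nat.pow_log_le_self b hn

lemma recContent_le_rpow {b d D n : ℕ} (hw : 2 ≤ b - D) (hd : 0 < d) (hn : n ≠ 0) :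
    (recContent b d D n : ℝ) ≤ (d * (b * (b - D) + 1) : ℕ) *
      (n : ℝ) ^ (Real.log ((b - D : ℕ) : ℝ) / Real.log (b : ℝ)) := by
  have hb : 1 < b := by omega
  calc (recContent b d D n : ℝ)
      ≤ (d * (b * (b - D) + 1) : ℕ) * ((b - D : ℕ) : ℝ) ^ Nat.log b n := by
        exact_mod_cast recContent_le hw hd (Nat.lt_pow_succ_log_self hb n)
    _ ≤ _ := by
        gcongr
        exact pow_log_le_rpow_log_div_log hb (by omega) hn

section Recursion

section Semiring

variable {S M : Type*} [CommSemiring S] [AddCommMonoid M] [Module S M]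

/-- The shift operator `t ↦ (n ↦ t (n + 1))` on sequences in a module. A sequence satisfies a linear
recursion iff the companion polynomial of the recursion, evaluated at this operator, kills it. -/
def sequenceShift (S M : Type*) [Semiring S] [AddCommMonoid M] [Module S M] :
    Module.End S (ℕ → M) :=
  LinearMap.funLeft S M Nat.succ

lemma sequenceShift_pow_apply (k : ℕ) (t : ℕ → M) (n : ℕ) :
    (sequenceShift S M ^ k) t n = t (n + k) := by
  induction k generalizing t with
  | zero => rfl
  | succ k ih =>
    rw [pow_succ, Module.End.mul_apply, ih]
    rfl

/-- The companion polynomial `X ^ d + c₁ X ^ (d - 1) + ⋯ + c_d` of the recursion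
`t n + c₁ t (n - 1) + ⋯ + c_d t (n - d) = 0`; the value `c 0` is ignored. -/
noncomputable def companionPolynomial (d : ℕ) (c : ℕ → S) : S[X] :=
  X ^ d + ∑ i ∈ Finset.Icc 1 d, C (c i) * X ^ (d - i)

lemma aeval_sequenceShift_pow_companionPolynomial_apply (d q : ℕ) (c : ℕ → S) (t : ℕ → M)
    (n : ℕ) : aeval (sequenceShift S M ^ q) (companionPolynomial d c) t n =
      t (n + d * q) + ∑ i ∈ Finset.Icc 1 d, c i • t (n + d * q - i * q) := by
  have hindex : ∀ i ∈ Finset.Icc 1 d, n + q * (d - i) = n + d * q - i * q := fun i hi => by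
    rw [Nat.add_sub_assoc (Nat.mul_le_mul_right q (Finset.mem_Icc.1 hi).2), ← Nat.sub_mul,
      mul_comm]
  simp only [companionPolynomial, map_add, map_sum, map_mul, map_pow, aeval_X, aeval_C,
    ← pow_mul, LinearMap.add_apply, LinearMap.sum_apply, Module.End.mul_apply,
    Module.algebraMap_end_apply, Pi.add_apply, Finset.sum_apply, Pi.smul_apply,
    sequenceShift_pow_apply, mul_comm q d]
  exact congrArg _ (Finset.sum_congr rfl fun i hi => by rw [hindex i hi])

lemma companionPolynomial_pow_expChar_pow (p : ℕ) [ExpChar S p] (d e : ℕ) (c : ℕ → S) :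
    companionPolynomial d c ^ p ^ e =
      expand S (p ^ e) (companionPolynomial d fun i => c i ^ p ^ e) := by
  rw [← map_iterateFrobenius_expand, map_expand]
  simp [companionPolynomial, Polynomial.map_sum, iterateFrobenius_def]

end Semiring

variable {S M : Type*} [CommRing S] [AddCommGroup M] [Module S M]

lemma aeval_sequenceShift_pow_companionPolynomial_eq_zero_iff {d q : ℕ} {c : ℕ → S}
    {t : ℕ → M} : aeval (sequenceShift S M ^ q) (companionPolynomial d c) t = 0 ↔
      ∀ n, d * q ≤ n → t n = -∑ i ∈ Finset.Icc 1 d, c i • t (n - i * q) := by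
  simp only [funext_iff, aeval_sequenceShift_pow_companionPolynomial_apply, Pi.zero_apply,
    add_eq_zero_iff_eq_neg]
  refine ⟨fun h n hn => ?_, fun h m => h _ (Nat.le_add_left _ _)⟩
  simpa only [Nat.sub_add_cancel hn] using h (n - d * q)

lemma recursion_pow_expChar_pow (p : ℕ) [ExpChar S p] {d : ℕ} {c : ℕ → S} {t : ℕ → M}
    (hrec : ∀ n, d ≤ n → t n = -∑ i ∈ Finset.Icc 1 d, c i • t (n - i)) (e : ℕ) {n : ℕ}
    (hn : d * p ^ e ≤ n) :
    t n = -∑ i ∈ Finset.Icc 1 d, c i ^ p ^ e • t (n - i * p ^ e) := by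
  have hann : aeval (sequenceShift S M) (companionPolynomial d c) t = 0 := by
    simpa using (aeval_sequenceShift_pow_companionPolynomial_eq_zero_iff (q := 1)).2
      (by simpa using hrec)
  have hannpow : aeval (sequenceShift S M) (companionPolynomial d c ^ p ^ e) t = 0 := by
    rw [← Nat.sub_one_add_one (expChar_pow_pos S p e).ne', pow_succ, map_mul,
      Module.End.mul_apply, hann, map_zero]
  rw [companionPolynomial_pow_expChar_pow, expand_aeval] at hannpow
  exact aeval_sequenceShift_pow_companionPolynomial_eq_zero_iff.1 hannpow n hn

end Recursion

lemma exists_mem_support_of_mem_support_mul {R : Type*} [Semiring R] {f g : R[X]} {m : ℕ}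
    (h : m ∈ (f * g).support) :
    ∃ i ∈ f.support, ∃ j ∈ g.support, i + j = m := by
  rw [mem_support_iff, coeff_mul] at h
  obtain ⟨⟨i, j⟩, hij, hne⟩ := Finset.exists_ne_zero_of_sum_ne_zero h
  exact ⟨i, mem_support_iff.2 (left_ne_zero_of_mul hne), j,
    mem_support_iff.2 (right_ne_zero_of_mul hne),
    Finset.HasAntidiagonal.mem_antidiagonal.1 hij⟩

lemma exists_mem_support_of_mem_support_pow_expChar_pow {R : Type*} [CommSemiring R] (p : ℕ)
    [ExpChar R p] {f : R[X]} {e m : ℕ} (h : m ∈ (f ^ p ^ e).support) :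
    ∃ j ∈ f.support, m = j * p ^ e := by
  rw [← map_iterateFrobenius_expand] at h
  have hm := mem_support_iff.1 (support_map_subset _ _ h)
  rw [coeff_expand (expChar_pow_pos R p e)] at hm
  split_ifs at hm with hdvd
  · exact ⟨m / p ^ e, mem_support_iff.2 hm, (Nat.div_mul_cancel hdvd).symm⟩
  · exact absurd rfl hm

lemma exists_mem_support_of_recursion {R : Type*} [CommRing R] (p : ℕ) [ExpChar R p]
    {d : ℕ} {c t : ℕ → R[X]}
    (hrec : ∀ n, d ≤ n → t n = -∑ i ∈ Finset.Icc 1 d, c i * t (n - i)) {e n m : ℕ}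
    (hn : d * p ^ e ≤ n) (hm : m ∈ (t n).support) :
    ∃ i ∈ Finset.Icc 1 d, ∃ j ∈ (c i).support, ∃ m' ∈ (t (n - i * p ^ e)).support,
      j * p ^ e + m' = m := by
  have : ExpChar R[X] p := expChar_of_injective_ringHom C_injective p
  rw [recursion_pow_expChar_pow p (S := R[X]) hrec e hn, support_neg, mem_support_iff,
    finsetSum_coeff] at hm
  obtain ⟨i, hi, hne⟩ := Finset.exists_ne_zero_of_sum_ne_zero hm
  obtain ⟨s, hs, m', hm', rfl⟩ := exists_mem_support_of_mem_support_mul (mem_support_iff.2 hne)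
  obtain ⟨j, hj, rfl⟩ := exists_mem_support_of_mem_support_pow_expChar_pow p hs
  exact ⟨i, hi, j, hj, m', hm', rfl⟩

/-- `T` strictly lowers the weight under which the monomial `y ^ n` weighs `φ n`. This bounds the
nilpotence index of `y ^ n` by `φ n`. -/
def LowersWeight {R : Type*} [Semiring R] (T : Module.End R R[X]) (φ : ℕ → ℕ) : Prop :=
  ∀ n, ∀ m ∈ (T (X ^ n)).support, φ m < φ n

lemma LowersWeight.pow_apply_eq_zero {R : Type*} [Semiring R] {T : Module.End R R[X]}
    {φ : ℕ → ℕ} (hT : LowersWeight T φ) {k : ℕ} {f : R[X]} (hf : ∀ m ∈ f.support, φ m < k) :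
    (T ^ k) f = 0 := by
  induction k generalizing f with
  | zero => simpa [Polynomial.ext_iff] using hf
  | succ k ih =>
    rw [pow_succ, Module.End.mul_apply]
    refine ih fun m hm => ?_
    rw [f.as_sum_support_C_mul_X_pow, map_sum, mem_support_iff, finsetSum_coeff] at hm
    obtain ⟨j, hj, hne⟩ := Finset.exists_ne_zero_of_sum_ne_zero hm
    rw [← smul_eq_C_mul, map_smul, coeff_smul, smul_eq_mul] at hne
    exact (hT j m (mem_support_iff.2 (right_ne_zero_of_mul hne))).trans_le
      (Nat.lt_succ_iff.1 (hf j hj))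

lemma LowersWeight.nilpIndex_X_pow_le {R : Type} [CommRing R] {T : Module.End R R[X]}
    {φ : ℕ → ℕ} (hT : LowersWeight T φ) (n : ℕ) : nilpIndex T (X ^ n) ≤ φ n := by
  refine csSup_le' fun k hk => ?_
  by_contra! hlt
  refine hk (hT.pow_apply_eq_zero fun m hm => ?_)
  rw [X_pow_eq_monomial] at hm
  rwa [Finset.mem_singleton.1 (support_monomial_subset n 1 hm)]

section EmptyMiddle

variable {R : Type*}

/-- Write `y` for the variable of the coefficient ring. The companion polynomial
`X ^ d + c₁ X ^ (d - 1) + ⋯ + c_d` over `R[y]` has an empty middle: apart from `X ^ d` and a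
multiple of `y ^ d`, all its monomials have total degree at most `d - D`. For the monomial
`y ^ j * X ^ (d - i)` this says `j + D ≤ i`. -/
def HasEmptyMiddle [Semiring R] (d D : ℕ) (c : ℕ → R[X]) : Prop :=
  ∀ i ∈ Finset.Icc 1 d, ∀ j ∈ (c i).support, j + D ≤ i ∨ i = d ∧ j = d

lemma hasEmptyMiddle_of_coeff_of_degree [Semiring R] {d D : ℕ} (hDd : D ≤ d) {a : R}
    {c : ℕ → R[X]} {r : R[X]}
    (hci : ∀ i, 1 ≤ i → i ≤ d - 1 → ∀ k : ℕ, (c i).coeff k ≠ 0 → (k : ℤ) ≤ (i : ℤ) - D)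
    (hcd : c d = C a * X ^ d + r) (hr : r.degree ≤ ((d - D : ℕ) : WithBot ℕ)) :
    HasEmptyMiddle d D c := by
  intro i hi j hj
  rw [Finset.mem_Icc] at hi
  rw [mem_support_iff] at hj
  rcases hi.2.lt_or_eq with hlt | rfl
  · have := hci i hi.1 (by omega) j hj
    omega
  · by_cases hji : j = i
    · exact Or.inr ⟨rfl, hji⟩
    · rw [hcd, coeff_add, coeff_C_mul_X_pow, if_neg hji, zero_add] at hj
      have hle : j ≤ i - D := by exact_mod_cast (le_degree_of_ne_zero hj).trans hr
      omega

lemma HasEmptyMiddle.recContent_lt [CommRing R] {p : ℕ} [ExpChar R p]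
    {b d D : ℕ} (hbp : ∃ l : ℕ, b = p ^ l) (hb : 1 < b) (hd : 0 < d) (hDd : D ≤ d) (hdb : d ≤ b)
    {c : ℕ → R[X]} (hc : HasEmptyMiddle d D c) {t : ℕ → R[X]}
    (hinit : ∀ n < d, ∀ m ∈ (t n).support, m < n)
    (hrec : ∀ n, d ≤ n → t n = -∑ i ∈ Finset.Icc 1 d, c i * t (n - i))
    (n : ℕ) {m : ℕ} (hm : m ∈ (t n).support) : recContent b d D m < recContent b d D n := by
  induction n using Nat.strong_induction_on generalizing m with
  | _ n ih =>
  rcases lt_or_ge n d with hnd | hnd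
  · have hmn := hinit n hnd m hm
    rwa [recContent_of_lt hnd, recContent_of_lt (hmn.trans hnd)]
  set k := Nat.log b (n / d)
  have hkn : b ^ k ≤ n / d := Nat.pow_log_le_self b (Nat.div_pos hnd hd).ne'
  have hnk : n / d < b ^ (k + 1) := Nat.lt_pow_succ_log_self hb _
  have hle : d * b ^ k ≤ n := by rw [mul_comm]; exact (Nat.le_div_iff_mul_le hd).1 hkn
  obtain ⟨e, he⟩ : ∃ e, b ^ k = p ^ e := by
    obtain ⟨l, rfl⟩ := hbp
    exact ⟨l * k, (pow_mul p l k).symm⟩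
  obtain ⟨i, hi, j, hj, m', hm', rfl⟩ :=
    exists_mem_support_of_recursion p hrec (e := e) (by rwa [← he]) hm
  rw [← he] at hm' ⊢
  have hid := Finset.mem_Icc.1 hi
  have hsmaller : n - i * b ^ k < n :=
    Nat.sub_lt (hd.trans_le hnd) (Nat.mul_pos hid.1 (by positivity))
  calc recContent b d D (j * b ^ k + m')
      ≤ recContent b d D (j * b ^ k) + recContent b d D m' := recContent_add_le hb hd _ _
    _ < recContent b d D (j * b ^ k) + recContent b d D (n - i * b ^ k) :=
        Nat.add_lt_add_left (ih _ hsmaller hm') _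
    _ ≤ recContent b d D n :=
        recContent_mul_pow_add_sub_le hb hd hDd hdb hkn hnk hid.2 (hc i hi j hj)

end EmptyMiddle

lemma lt_of_mem_support_of_degree_lt {R : Type*} [Semiring R] {f : R[X]} {m n : ℕ}
    (hf : f.degree < n) (hm : m ∈ f.support) : m < n := by
  exact_mod_cast (le_degree_of_mem_supp m hm).trans_lt hf

theorem stmt2_general (p : ℕ) (hp : p.Prime) {R : Type} [CommRing R] [CharP R p]
    (T : Module.End R (Polynomial R))
    (hdeglow : ∀ f : Polynomial R, f ≠ 0 → (T f).degree < f.degree)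
    (d D : ℕ) (hd : 0 < d) (hDd : D ≤ d)
    (a : R) (c : ℕ → Polynomial R) (r : Polynomial R)
    (hci : ∀ i, 1 ≤ i → i ≤ d - 1 → ∀ k : ℕ, (c i).coeff k ≠ 0 → (k : ℤ) ≤ (i : ℤ) - D)
    (hcd : c d = C a * X ^ d + r)
    (hr : r.degree ≤ ((d - D : ℕ) : WithBot ℕ))
    (hrec : ∀ n, d ≤ n →
      T ((X : Polynomial R) ^ n) = -∑ i ∈ Finset.Icc 1 d, c i * T (X ^ (n - i)))
    (b : ℕ) (hb : ∃ k : ℕ, b = p ^ k) (hbd : d ≤ b) (hbD : 2 ≤ b - D) :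
    ∃ Cst : ℝ, 0 < Cst ∧ ∀ n : ℕ, 1 ≤ n →
      (nilpIndex T (X ^ n) : ℝ) ≤
        Cst * (n : ℝ) ^ (Real.log ((b - D : ℕ) : ℝ) / Real.log (b : ℝ)) := by
  have : Fact p.Prime := ⟨hp⟩
  have : Nontrivial R := CharP.nontrivial_of_char_ne_one hp.ne_one
  have hinit : ∀ n < d, ∀ m ∈ (T (X ^ n)).support, m < n := fun n _ m =>
    lt_of_mem_support_of_degree_lt <| by
      simpa only [degree_X_pow] using hdeglow (X ^ n) (monic_X_pow n).ne_zero
  have hlow : LowersWeight T (recContent b d D) := fun n _ =>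
    (hasEmptyMiddle_of_coeff_of_degree hDd hci hcd hr).recContent_lt hb (by omega) hd hDd hbd
      hinit hrec n
  refine ⟨(d * (b * (b - D) + 1) : ℕ), by positivity, fun n hn => ?_⟩
  calc (nilpIndex T (X ^ n) : ℝ) ≤ recContent b d D n := by
        exact_mod_cast hlow.nilpIndex_X_pow_le n
    _ ≤ _ := recContent_le_rpow hbD hd (by omega)

/-- **Empty-middle Nilpotence Growth Theorem.** -/
theorem stmt2 (p : ℕ) (hp : p.Prime) {R : Type} [CommRing R] [CharP R p]
    (T : Module.End R (Polynomial R))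
    (hdeglow : ∀ f : Polynomial R, f ≠ 0 → (T f).degree < f.degree)
    (d D : ℕ) (hD1 : 1 ≤ D) (hDd : D ≤ d)
    (a : R) (c : ℕ → Polynomial R) (r : Polynomial R)
    -- `deg c_i ≤ i - D` for `1 ≤ i ≤ d-1` (as integers, so `c i = 0` if `i < D`):
    (hci : ∀ i, 1 ≤ i → i ≤ d - 1 → ∀ k : ℕ, (c i).coeff k ≠ 0 → (k : ℤ) ≤ (i : ℤ) - D)
    (hcd : c d = C a * X ^ d + r)
    (hr : r.degree ≤ ((d - D : ℕ) : WithBot ℕ))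
    (hrec : ∀ n, d ≤ n →
      T ((X : Polynomial R) ^ n) = -∑ i ∈ Finset.Icc 1 d, c i * T (X ^ (n - i)))
    (b : ℕ) (hb : ∃ k : ℕ, b = p ^ k) (hbd : d ≤ b) (hbD : 2 ≤ b - D)
    (hcase : b - d ≤ 1 ∨ 2 * D ≤ b) :
    ∃ Cst : ℝ, 0 < Cst ∧ ∀ n : ℕ, 1 ≤ n →
      (nilpIndex T (X ^ n) : ℝ) ≤
        Cst * (n : ℝ) ^ (Real.log ((b - D : ℕ) : ℝ) / Real.log (b : ℝ)) := by
  exact stmt2_general p hp T hdeglow d D (hD1.trans hDd) hDd a c r hci hcd hr hrec b hb hbd hbD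
end

section
/- Let p be a prime, M a commutative ring of characteristic p, M' an M-module, and s : ℕ → M' a sequence satisfying an order-d linear recurrence with coefficients a_1, …, a_d ∈ M: s_n = a_1·s_{n−1} + a_2·s_{n−2} + ⋯ + a_d·s_{n−d} for all n ≥ d. Then for every k ≥ 0, the sequence s also satisfies the order-(d·p^k) recurrence s_n = a_1^{p^k}·s_{n−p^k} + a_2^{p^k}·s_{n−2·p^k} + ⋯ + a_d^{p^k}·s_{n−d·p^k} for all n ≥ d·p^k. -/
/-!
Let `T` be the shift on sequences. The recurrence says that `T ^ d` and the polynomial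
`a₁ T ^ (d - 1) + ⋯ + a_d` in `T` agree at `s`. These operators commute, so their `p ^ k`-th powers
also agree at `s`, and in characteristic `p` such a power is obtained by replacing `T` with
`T ^ p ^ k` and every coefficient with its `p ^ k`-th power.
-/

open Polynomial

section Frobenius

variable {R : Type*} [CommSemiring R]

theorem aeval_pow_apply_eq_of_aeval_apply_eq {N : Type*} [AddCommMonoid N] [Module R N]
    {T : Module.End R N} {P Q : R[X]} {v : N} (h : aeval T P v = aeval T Q v) (m : ℕ) :
    aeval T (P ^ m) v = aeval T (Q ^ m) v := by
  have hcomm : Function.Commute (aeval T P) (aeval T Q) :=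
    DFunLike.congr_fun ((Commute.all P Q).map (aeval T)).eq
  simpa only [map_pow, Module.End.pow_apply] using hcomm.iterate_eq_of_map_eq m h

theorem aeval_pow_map_iterateFrobenius {A : Type*} [Semiring A] [Algebra R A] (p : ℕ)
    [ExpChar R p] (x : A) (P : R[X]) (k : ℕ) :
    aeval (x ^ p ^ k) (P.map (iterateFrobenius R p k)) = aeval x (P ^ p ^ k) := by
  rw [← expand_aeval, ← map_expand, map_iterateFrobenius_expand]

end Frobenius

section Semiring

variable {R N : Type*} [Semiring R] [AddCommMonoid N] [Module R N]

/-- The linear recurrence `s n = a 1 • s (n - q) + ⋯ + a d • s (n - d * q)` for `n ≥ d * q`, whose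
terms are `q` apart. Stride `q = 1` is the usual recurrence of order `d`. -/
def SatisfiesRecurrence (q d : ℕ) (a : ℕ → R) (s : ℕ → N) : Prop :=
  ∀ n, d * q ≤ n → s n = ∑ i ∈ Finset.Icc 1 d, a i • s (n - i * q)

/-- The polynomial `a 1 * X ^ (d - 1) + ⋯ + a d`. The companion polynomial is `X ^ d` minus this
tail; the two parts are kept apart because coefficients in a semiring cannot be subtracted. -/
noncomputable def companionTail (d : ℕ) (a : ℕ → R) : R[X] :=
  ∑ i ∈ Finset.Icc 1 d, C (a i) * X ^ (d - i)

theorem map_companionTail {S : Type*} [Semiring S] (f : R →+* S) (d : ℕ) (a : ℕ → R) :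
    (companionTail d a).map f = companionTail d (fun i ↦ f (a i)) := by
  simp [companionTail, Polynomial.map_sum]

variable (R N) in
/-- The left shift on sequences, the operator at which companion polynomials are evaluated. -/
def shift : Module.End R (ℕ → N) :=
  LinearMap.funLeft R N Nat.succ

theorem shift_pow_apply (j : ℕ) (s : ℕ → N) (m : ℕ) : (shift R N ^ j) s m = s (m + j) := by
  induction j generalizing s with
  | zero => rfl
  | succ j ih =>
    rw [pow_succ, Module.End.mul_apply]
    exact ih (shift R N s)

end Semiring

section CommSemiring

variable {R N : Type*} [CommSemiring R] [AddCommMonoid N] [Module R N]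

theorem aeval_shift_pow_companionTail_apply (q d : ℕ) (a : ℕ → R) (s : ℕ → N) (m : ℕ) :
    aeval (shift R N ^ q) (companionTail d a) s m =
      ∑ i ∈ Finset.Icc 1 d, a i • s (m + (d - i) * q) := by
  simp [companionTail, LinearMap.sum_apply, ← pow_mul', shift_pow_apply]

theorem satisfiesRecurrence_iff_aeval_shift {q d : ℕ} {a : ℕ → R} {s : ℕ → N} :
    SatisfiesRecurrence q d a s ↔
      aeval (shift R N ^ q) (X ^ d : R[X]) s =
        aeval (shift R N ^ q) (companionTail d a) s := by
  have hsum (m : ℕ) : aeval (shift R N ^ q) (companionTail d a) s m =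
      ∑ i ∈ Finset.Icc 1 d, a i • s (m + d * q - i * q) := by
    rw [aeval_shift_pow_companionTail_apply]
    refine Finset.sum_congr rfl fun i hi ↦ ?_
    rw [Nat.sub_mul, Nat.add_sub_assoc (Nat.mul_le_mul_right q (Finset.mem_Icc.mp hi).2)]
  simp only [funext_iff, hsum, aeval_X_pow, ← pow_mul', shift_pow_apply]
  refine ⟨fun h m ↦ h _ (Nat.le_add_left _ m), fun h n hn ↦ ?_⟩
  simpa only [Nat.sub_add_cancel hn] using h (n - d * q)

theorem stmt5_general (p : ℕ) [ExpChar R p] {q d : ℕ} {a : ℕ → R} {s : ℕ → N}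
    (hrec : SatisfiesRecurrence q d a s) (k : ℕ) :
    SatisfiesRecurrence (q * p ^ k) d (fun i ↦ a i ^ p ^ k) s := by
  rw [satisfiesRecurrence_iff_aeval_shift] at hrec ⊢
  have hpow := aeval_pow_apply_eq_of_aeval_apply_eq hrec (p ^ k)
  rw [← aeval_pow_map_iterateFrobenius, ← aeval_pow_map_iterateFrobenius, ← pow_mul] at hpow
  simpa only [Polynomial.map_pow, map_X, map_companionTail, iterateFrobenius_def] using hpow

end CommSemiring

/-- In characteristic `p`, a linear recurrence of order `d` yields, for every `k`,
a linear recurrence of order `d·p^k` with Frobenius-twisted coefficients. -/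
theorem stmt5 (p : ℕ) (hp : p.Prime) {M : Type} [CommRing M] [CharP M p]
    {M' : Type} [AddCommMonoid M'] [Module M M']
    (d : ℕ) (a : ℕ → M) (s : ℕ → M')
    (hrec : ∀ n, d ≤ n → s n = ∑ i ∈ Finset.Icc 1 d, a i • s (n - i)) :
    ∀ k : ℕ, ∀ n, d * p ^ k ≤ n →
      s n = ∑ i ∈ Finset.Icc 1 d, (a i) ^ (p ^ k) • s (n - i * p ^ k) := by
  have : ExpChar M p := .prime hp
  simpa only [SatisfiesRecurrence, mul_one, one_mul] using
    stmt5_general p (q := 1) (by simpa only [SatisfiesRecurrence, mul_one] using hrec)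
end
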